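/- Let L be a (1,1)-tensor field with N_L = 0, let χ = χ1·χ2 be an admissible factorisation of its characteristic polynomial, and let (x¹,…,x^r, y^{r+1},…,y^n) be adapted coordinates in which L = diag(L1(x), L2(y)), so that χ2 is the characteristic polynomial of L2 and its coefficients depend only on y. Then the expression χ2(L1)^{-1}·(d_y χ2(L1)) (where d_y differentiates the y-dependent coefficients of χ2, L1 being kept fixed) satisfies (χ2(L1)^{-1} d_y χ2(L1))·L2 − L1·(χ2(L1)^{-1} d_y χ2(L1)) = Id_{D1} ⊗ l2, i.e., in coordinates, (χ2(L1)^{-1})^j_m (∂_{y^β} χ2(L1))^m_k (L2)^β_α − (L1)^j_m (χ2(L1)^{-1})^m_l (∂_{y^α} χ2(L1))^l_k = δ^j_k · ∂_{y^α}(tr L2), where l2 = d(tr L2). -/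

import Mathlib

open Matrix Polynomial Filter

noncomputable section

variable {ι : Type} [Fintype ι] [DecidableEq ι]

/-- Partial derivative of a real-valued function on `ι → ℝ` in the direction of the
`j`-th coordinate vector. -/
def pd (j : ι) (F : (ι → ℝ) → ℝ) (x : ι → ℝ) : ℝ :=
  fderiv ℝ F x (Pi.single j 1)

/-- Christoffel symbols `Γ^i_{jk}` of a metric given in local coordinates as a
matrix-valued function. -/
def christoffel (g : (ι → ℝ) → Matrix ι ι ℝ) (x : ι → ℝ) (i j k : ι) : ℝ :=
  (1 / 2) * ∑ m, (g x)⁻¹ i m *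
    (pd j (fun y => g y m k) x + pd k (fun y => g y m j) x - pd m (fun y => g y j k) x)

/-- A curve is a geodesic of `g` up to reparametrisation (an unparametrized geodesic):
`γ̈ + Γ(γ̇,γ̇) = α(t)·γ̇` for some function `α`. -/
def IsPregeodesic (g : (ι → ℝ) → Matrix ι ι ℝ) (γ : ℝ → ι → ℝ) : Prop :=
  ∃ α : ℝ → ℝ, ∀ t : ℝ, ∀ i : ι,
    deriv (fun s => deriv (fun τ => γ τ i) s) t
      + ∑ j, ∑ k, christoffel g (γ t) i j k *
          deriv (fun τ => γ τ j) t * deriv (fun τ => γ τ k) t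
      = α t * deriv (fun τ => γ τ i) t

/-- `g` is a pseudo-Riemannian metric (in local coordinates) on the set `U`. -/
structure IsMetricOn (g : (ι → ℝ) → Matrix ι ι ℝ) (U : Set (ι → ℝ)) : Prop where
  smooth : ∀ i j, ContDiffOn ℝ (⊤ : ℕ∞) (fun x => g x i j) U
  symm : ∀ x ∈ U, (g x)ᵀ = g x
  nondeg : ∀ x ∈ U, IsUnit (g x).det

/-- Two metrics are geodesically equivalent on `U`: they have the same geodesics
considered as unparametrized curves. -/
def GeodEquiv (g gb : (ι → ℝ) → Matrix ι ι ℝ) (U : Set (ι → ℝ)) : Prop :=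
  ∀ γ : ℝ → ι → ℝ, ContDiff ℝ (⊤ : ℕ∞) γ → (∀ t, γ t ∈ U) →
    (IsPregeodesic g γ ↔ IsPregeodesic gb γ)

/-- The (1,1)-tensor `L(g,ḡ)^i_j = (det ḡ / det g)^{1/(n+1)} ḡ^{ik} g_{kj}`. -/
def Lten (g gb : (ι → ℝ) → Matrix ι ι ℝ) (x : ι → ℝ) : Matrix ι ι ℝ :=
  (((gb x).det / (g x).det) ^ ((1 : ℝ) / (Fintype.card ι + 1))) • ((gb x)⁻¹ * g x)

/-- An admissible factorisation `χ = χ₁·χ₂` of the characteristic polynomial of `L`: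
both factors are monic of degree ≥ 1, have smooth coefficients, and have no common
complex root at any point of `U`. -/
structure AdmissibleFact (L : (ι → ℝ) → Matrix ι ι ℝ) (U : Set (ι → ℝ))
    (chi1 chi2 : (ι → ℝ) → Polynomial ℝ) : Prop where
  factor : ∀ x ∈ U, (L x).charpoly = chi1 x * chi2 x
  monic1 : ∀ x ∈ U, (chi1 x).Monic
  monic2 : ∀ x ∈ U, (chi2 x).Monic
  deg1 : ∀ x ∈ U, 1 ≤ (chi1 x).natDegree
  deg2 : ∀ x ∈ U, 1 ≤ (chi2 x).natDegree
  smooth1 : ∀ k, ContDiffOn ℝ (⊤ : ℕ∞) (fun x => (chi1 x).coeff k) U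
  smooth2 : ∀ k, ContDiffOn ℝ (⊤ : ℕ∞) (fun x => (chi2 x).coeff k) U
  coprime : ∀ x ∈ U, ¬ ∃ z : ℂ, aeval z (chi1 x) = 0 ∧ aeval z (chi2 x) = 0

/-- The distribution `D = ker χ(L)`. -/
def Dker (L : (ι → ℝ) → Matrix ι ι ℝ) (chi : (ι → ℝ) → Polynomial ℝ) (x : ι → ℝ) :
    Submodule ℝ (ι → ℝ) :=
  LinearMap.ker (Matrix.mulVecLin (aeval (L x) (chi x)))

/-- A distribution on `U` is integrable (involutive, which is equivalent by the
Frobenius theorem): the Lie bracket of any two smooth vector fields tangent to the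
distribution is again tangent to it. -/
def IsIntegrableDist (U : Set (ι → ℝ)) (D : (ι → ℝ) → Submodule ℝ (ι → ℝ)) : Prop :=
  ∀ u v : (ι → ℝ) → ι → ℝ, ContDiffOn ℝ (⊤ : ℕ∞) u U → ContDiffOn ℝ (⊤ : ℕ∞) v U →
    (∀ x ∈ U, u x ∈ D x) → (∀ x ∈ U, v x ∈ D x) →
    ∀ x ∈ U, (fderiv ℝ v x (u x) - fderiv ℝ u x (v x)) ∈ D x

/-- The Lie bracket of two vector fields on `ι → ℝ`. -/
def vbracket (u v : (ι → ℝ) → ι → ℝ) (x : ι → ℝ) : ι → ℝ :=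
  fderiv ℝ v x (u x) - fderiv ℝ u x (v x)

/-- The vector field `Lu : x ↦ L(x)(u(x))`. -/
def appT (L : (ι → ℝ) → Matrix ι ι ℝ) (u : (ι → ℝ) → ι → ℝ) : (ι → ℝ) → ι → ℝ :=
  fun x => (L x).mulVec (u x)

/-- The Nijenhuis torsion `N_L(u,v) = L²[u,v] − L[Lu,v] − L[u,Lv] + [Lu,Lv]`. -/
def nijenhuis (L : (ι → ℝ) → Matrix ι ι ℝ) (u v : (ι → ℝ) → ι → ℝ)
    (x : ι → ℝ) : ι → ℝ :=
  (L x).mulVec ((L x).mulVec (vbracket u v x))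
  - (L x).mulVec (vbracket (appT L u) v x)
  - (L x).mulVec (vbracket u (appT L v) x)
  + vbracket (appT L u) (appT L v) x

/-- `N_L = 0` on `U`, tested against all smooth vector fields. -/
def NijenhuisZero (L : (ι → ℝ) → Matrix ι ι ℝ) (U : Set (ι → ℝ)) : Prop :=
  ∀ u v : (ι → ℝ) → ι → ℝ, ContDiff ℝ (⊤ : ℕ∞) u → ContDiff ℝ (⊤ : ℕ∞) v →
    ∀ x ∈ U, nijenhuis L u v x = 0

/-- Inclusion of the first `r` indices. -/
def inj1 {n r : ℕ} (hr : r ≤ n) (i : Fin r) : Fin n := Fin.castLE hr i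

/-- Inclusion of the last `n - r` indices. -/
def inj2 {n r : ℕ} (i : Fin (n - r)) : Fin n :=
  ⟨r + (i : ℕ), by have := i.isLt; omega⟩

section CharpolyDeriv
variable {E κ : Type*} [NormedAddCommGroup E] [NormedSpace ℝ E] [Fintype κ] [DecidableEq κ]

/-- Jacobi's formula for the derivative of a determinant. -/
theorem hasFDerivAt_det {A : E → Matrix κ κ ℝ} {x : E}
    (hA : ∀ i j, DifferentiableAt ℝ (fun y => A y i j) x) :
    ∃ D : E →L[ℝ] ℝ, HasFDerivAt (fun y => (A y).det) D x ∧
      ∀ v, D v = ((A x).adjugate * of fun i j => fderiv ℝ (fun y => A y i j) x v).trace := by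
  let f : ContinuousMultilinearMap ℝ (fun _ : κ => κ → ℝ) ℝ :=
    { (detRowAlternating (n := κ) (R := ℝ)).toMultilinearMap with
      cont := by
        change Continuous fun m : κ → κ → ℝ => Matrix.det (of m)
        exact Continuous.matrix_det (by exact continuous_id) }
  have hAx : HasFDerivAt (fun y i j => A y i j)
      (ContinuousLinearMap.pi fun i => ContinuousLinearMap.pi fun j =>
        fderiv ℝ (fun y => A y i j) x) x :=
    hasFDerivAt_pi.2 fun i => hasFDerivAt_pi.2 fun j => (hA i j).hasFDerivAt
  refine ⟨_, (f.hasFDerivAt (fun i j => A x i j)).comp (f := fun y i j => A y i j) x hAx,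
    fun v => ?_⟩
  rw [trace_mul_comm]
  simp only [ContinuousLinearMap.comp_apply, ContinuousMultilinearMap.linearDeriv_apply, trace,
    diag_apply]
  refine Finset.sum_congr rfl fun i _ => ?_
  change det (updateRow (A x) i fun j => fderiv ℝ (fun y => A y i j) x v) = _
  rw [← det_transpose, ← updateCol_transpose, ← cramer_apply, cramer_eq_adjugate_mulVec,
    ← adjugate_transpose]
  simp [mulVec, dotProduct, mul_apply, mul_comm]

theorem differentiableAt_charpoly_coeff {M : E → Matrix κ κ ℝ} {x : E}
    (hM : ∀ i j, DifferentiableAt ℝ (fun y => M y i j) x) (d : ℕ) :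
    DifferentiableAt ℝ (fun y => (M y).charpoly.coeff d) x := by
  have h : ∀ y, (M y).charpoly.coeff d =
      MvPolynomial.aeval (fun p : κ × κ => M y p.1 p.2) ((charpoly.univ ℝ κ).coeff d) := by
    intro y
    rw [MvPolynomial.aeval_def, ← MvPolynomial.coe_eval₂Hom, charpoly.univ_coeff_eval₂Hom]
    rfl
  simp_rw [h]
  induction (charpoly.univ ℝ κ).coeff d using MvPolynomial.induction_on with
  | C a => simp
  | add p q hp hq => simpa using hp.fun_add hq
  | mul_X p i hp => simpa using hp.fun_mul (hM i.1 i.2)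

/-- The polynomial obtained by differentiating the coefficients of the characteristic
polynomial of `M` at `x` in the direction `v`. -/
def charpolyFDeriv (M : E → Matrix κ κ ℝ) (x v : E) : ℝ[X] :=
  ∑ d ∈ Finset.range (Fintype.card κ + 1),
    C (fderiv ℝ (fun y => (M y).charpoly.coeff d) x v) * X ^ d

theorem eval_charpolyFDeriv {M : E → Matrix κ κ ℝ} {x : E}
    (hM : ∀ i j, DifferentiableAt ℝ (fun y => M y i j) x) (v : E) (t : ℝ) :
    (charpolyFDeriv M x v).eval t =
      -((scalar κ t - M x).adjugate * of fun i j => fderiv ℝ (fun y => M y i j) x v).trace := by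
  have hsum : HasFDerivAt (fun y => (scalar κ t - M y).det)
      (∑ d ∈ Finset.range (Fintype.card κ + 1),
        t ^ d • fderiv ℝ (fun y => (M y).charpoly.coeff d) x) x := by
    have h : ∀ y, (scalar κ t - M y).det =
        ∑ d ∈ Finset.range (Fintype.card κ + 1), (M y).charpoly.coeff d * t ^ d := by
      intro y
      rw [← eval_charpoly, eval_eq_sum_range, charpoly_natDegree_eq_dim]
    simp_rw [h]
    exact HasFDerivAt.fun_sum fun d _ =>
      (differentiableAt_charpoly_coeff hM d).hasFDerivAt.mul_const (t ^ d)
  obtain ⟨D, hD, hDv⟩ := hasFDerivAt_det (A := fun y => scalar κ t - M y) (x := x)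
    fun i j => by simpa only [Matrix.sub_apply] using (hM i j).const_sub _
  have hv := congrArg (fun T => T v) (hsum.unique hD)
  simp only [hDv, Matrix.sub_apply, fderiv_const_sub] at hv
  rw [charpolyFDeriv, eval_finsetSum]
  simp only [eval_mul, eval_C, eval_pow, eval_X]
  rw [← trace_neg, ← Matrix.mul_neg]
  simp only [_root_.sum_apply, _root_.smul_apply, smul_eq_mul] at hv
  simp only [mul_comm (t ^ _)] at hv
  exact hv

/-- If the directional derivatives of `M` along `e` satisfy the coordinate form of the vanishing
of the Nijenhuis torsion, then `dχ(t) ∘ M - t dχ(t) = χ(t) d(tr M)`. -/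
theorem charpolyFDeriv_of_torsion_eq_zero {M : E → Matrix κ κ ℝ} {x : E} {e : κ → E}
    (hM : ∀ i j, DifferentiableAt ℝ (fun y => M y i j) x) (a : κ)
    (hN : ∀ i j,
      ∑ b, M x b a * fderiv ℝ (fun y => M y i j) x (e b)
        - ∑ b, M x b j * fderiv ℝ (fun y => M y i a) x (e b)
        - ∑ b, M x i b * fderiv ℝ (fun y => M y b j) x (e a)
        + ∑ b, M x i b * fderiv ℝ (fun y => M y b a) x (e j) = 0) :
    ∑ b, C (M x b a) * charpolyFDeriv M x (e b) - X * charpolyFDeriv M x (e a) =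
      (M x).charpoly * C (fderiv ℝ (fun y => (M y).trace) x (e a)) := by
  refine Polynomial.funext fun t => ?_
  let B := scalar κ t - M x
  let dM : κ → Matrix κ κ ℝ := fun b => of fun i j => fderiv ℝ (fun y => M y i j) x (e b)
  let J : Matrix κ κ ℝ := of fun i j => fderiv ℝ (fun y => M y i a) x (e j)
  have hJ : ∑ b, M x b a • dM b = M x * dM a + (J * M x - M x * J) := by
    ext i j
    have := hN i j
    simp only [Matrix.sum_apply, Matrix.smul_apply, Matrix.add_apply, Matrix.sub_apply,
      mul_apply, smul_eq_mul, dM, J, of_apply]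
    simp only [mul_comm (fderiv ℝ (fun y => M y i a) x (e _))]
    linarith
  have hcomm : B.adjugate * M x = M x * B.adjugate := by
    have h1 : B.adjugate * B = B * B.adjugate := by rw [adjugate_mul, mul_adjugate]
    have h2 : M x = scalar κ t - B := by simp [B]
    rw [h2, Matrix.mul_sub, Matrix.sub_mul, h1,
      (scalar_commute t (Commute.all t) B.adjugate).eq]
  have htr : (B.adjugate * (J * M x - M x * J)).trace = 0 := by
    rw [Matrix.mul_sub, trace_sub, ← Matrix.mul_assoc, trace_mul_comm, ← Matrix.mul_assoc,
      ← hcomm, Matrix.mul_assoc, sub_self]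
  have hsum : ∑ b, M x b a * (B.adjugate * dM b).trace = (B.adjugate * (M x * dM a)).trace := by
    have := congrArg (fun T => (B.adjugate * T).trace) hJ
    simpa [Matrix.mul_sum, trace_sum, Matrix.mul_add, htr] using this
  have htrace : fderiv ℝ (fun y => (M y).trace) x (e a) = (dM a).trace := by
    simp only [trace, diag_apply]
    rw [fderiv_fun_sum fun i _ => hM i i]
    simp [dM]
  have hdet : t * (B.adjugate * dM a).trace - (B.adjugate * (M x * dM a)).trace =
      B.det * (dM a).trace := by
    have h : t • dM a - M x * dM a = B * dM a := by simp [B, Matrix.sub_mul, smul_eq_diagonal_mul]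
    rw [← smul_eq_mul, ← trace_smul, ← trace_sub, ← Matrix.mul_smul, ← Matrix.mul_sub, h,
      ← Matrix.mul_assoc, adjugate_mul]
    simp
  rw [eval_sub, eval_finsetSum]
  simp only [eval_mul, eval_C, eval_X, eval_charpolyFDeriv hM, eval_charpoly, htrace]
  simp only [mul_neg, Finset.sum_neg_distrib]
  change -(∑ b, M x b a * (B.adjugate * dM b).trace) - -(t * (B.adjugate * dM a).trace) = _
  rw [hsum, ← hdet]
  ring

end CharpolyDeriv

theorem isUnit_aeval_charpoly_of_no_common_root {κ : Type*} [Fintype κ] [DecidableEq κ]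
    (A : Matrix κ κ ℝ) (q : ℝ[X])
    (h : ¬ ∃ z : ℂ, aeval z A.charpoly = 0 ∧ aeval z q = 0) : IsUnit (aeval A q) := by
  have hc : IsCoprime A.charpoly q := by
    rw [Polynomial.isCoprime_iff_aeval_ne_zero_of_isAlgClosed ℝ ℂ]
    intro z
    by_contra hz
    push Not at hz
    exact h ⟨z, hz⟩
  obtain ⟨u, v, huv⟩ := hc
  have := congrArg (aeval A) huv
  simp only [map_add, map_mul, aeval_self_charpoly, mul_zero, zero_add, map_one] at this
  exact .of_mul_eq_one_right _ this

theorem fderiv_apply_eq_sum_pd {F : (ι → ℝ) → ℝ} (x v : ι → ℝ) :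
    fderiv ℝ F x v = ∑ b, v b * pd b F x := by
  conv_lhs => rw [pi_eq_sum_univ' v]
  simp [pd, map_sum]

/-- The coordinate components of the Nijenhuis torsion. -/
theorem nijenhuis_single_apply {L : (ι → ℝ) → Matrix ι ι ℝ} {x : ι → ℝ}
    (hL : ∀ i j, DifferentiableAt ℝ (fun y => L y i j) x) (a j i : ι) :
    nijenhuis L (fun _ => Pi.single a 1) (fun _ => Pi.single j 1) x i =
      ∑ b, L x b a * pd b (fun y => L y i j) x
        - ∑ b, L x b j * pd b (fun y => L y i a) x
        - ∑ b, L x i b * pd a (fun y => L y b j) x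
        + ∑ b, L x i b * pd j (fun y => L y b a) x := by
  have hcol : ∀ k, appT L (fun _ => Pi.single k 1) = fun y i => L y i k := by
    intro k
    ext y i
    simp [appT]
  have hfd : ∀ k v l, fderiv ℝ (fun y i => L y i k) x v l = fderiv ℝ (fun y => L y l k) x v := by
    intro k v l
    rw [fderiv_pi fun i => hL i k]
    rfl
  simp only [nijenhuis, vbracket, hcol, Pi.add_apply, Pi.sub_apply, Pi.neg_apply, mulVec, dotProduct, hfd,
    fderiv_fun_const, Pi.zero_apply, _root_.zero_apply, sub_zero, zero_sub, mul_zero, mul_neg,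
    Finset.sum_const_zero, Finset.sum_neg_distrib]
  simp only [fderiv_apply_eq_sum_pd x (fun i => L x i _)]
  simp only [pd]
  ring

theorem sum_eq_sum_inj2 {n r : ℕ} (hr : r ≤ n) (f : Fin n → ℝ)
    (hf : ∀ b : Fin n, (b : ℕ) < r → f b = 0) : ∑ b, f b = ∑ b : Fin (n - r), f (inj2 b) := by
  refine (Finset.sum_of_injOn inj2 (fun a _ b _ h => ?_) (by simp) (fun b _ hb => ?_)
    fun _ _ => rfl).symm
  · simpa [inj2, Fin.ext_iff] using h
  · by_cases hbr : (b : ℕ) < r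
    · exact hf b hbr
    · refine absurd ⟨⟨b - r, by omega⟩, by simp, ?_⟩ hb
      ext
      simp only [inj2]
      omega

theorem stmt17 {n r : ℕ} (hr : r ≤ n) (U : Set (Fin n → ℝ)) (hU : IsOpen U)
    (L : (Fin n → ℝ) → Matrix (Fin n) (Fin n) ℝ)
    (hLsmooth : ∀ i j, ContDiffOn ℝ (⊤ : ℕ∞) (fun x => L x i j) U)
    (hNL : NijenhuisZero L U)
    -- `L1`, `L2` are the two diagonal blocks of `L`
    (L1 : (Fin n → ℝ) → Matrix (Fin r) (Fin r) ℝ)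
    (hL1 : ∀ x, L1 x = Matrix.of fun i j => L x (inj1 hr i) (inj1 hr j))
    (L2 : (Fin n → ℝ) → Matrix (Fin (n - r)) (Fin (n - r)) ℝ)
    (hL2 : ∀ x, L2 x = Matrix.of fun i j => L x (inj2 i) (inj2 j))
    -- `L` is block-diagonal in the adapted coordinates, `L1` depends only on the
    -- `x`-variables and `L2` only on the `y`-variables
    (hblock : ∀ x ∈ U, ∀ i j : Fin n,
      (((i : ℕ) < r ∧ r ≤ (j : ℕ)) ∨ (r ≤ (i : ℕ) ∧ (j : ℕ) < r)) → L x i j = 0)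
    (hL1x : ∀ x ∈ U, ∀ i j : Fin r, ∀ β : Fin (n - r),
      pd (inj2 β) (fun y => L1 y i j) x = 0)
    (hL2y : ∀ x ∈ U, ∀ i j : Fin (n - r), ∀ k : Fin r,
      pd (inj1 hr k) (fun y => L2 y i j) x = 0)
    -- the factorisation `χ = χ₁·χ₂` into the characteristic polynomials of the
    -- blocks is admissible: no common complex roots
    (hcop : ∀ x ∈ U, ¬ ∃ z : ℂ,
      aeval z ((L1 x).charpoly) = 0 ∧ aeval z ((L2 x).charpoly) = 0) :
    -- then `(χ₂(L1)⁻¹ d_y χ₂(L1))·L2 − L1·(χ₂(L1)⁻¹ d_y χ₂(L1)) = Id ⊗ l₂`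
    ∀ x ∈ U, ∀ j k : Fin r, ∀ α : Fin (n - r),
      -- `d_y χ₂(L1)` in the direction `y^β`, where only the (`y`-dependent)
      -- coefficients of `χ₂` are differentiated:
      (∀ dyC : Fin (n - r) → Matrix (Fin r) (Fin r) ℝ,
        (∀ β m l, dyC β m l = ∑ d ∈ Finset.range (n - r + 1),
          pd (inj2 β) (fun y => ((L2 y).charpoly).coeff d) x * ((L1 x ^ d) m l)) →
        (∑ β, (∑ m, ((aeval (L1 x) ((L2 x).charpoly))⁻¹ j m) * dyC β m k) * L2 x β α)
          - (∑ m, L1 x j m *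
              (∑ l, ((aeval (L1 x) ((L2 x).charpoly))⁻¹ m l) * dyC α l k))
          = (if j = k then 1 else 0) * pd (inj2 α) (fun y => (L2 y).trace) x) := by
  intro x hx j k α dyC hdyC
  have hLd : ∀ i j, DifferentiableAt ℝ (fun y => L y i j) x := fun i j =>
    ((hLsmooth i j).contDiffAt (hU.mem_nhds hx)).differentiableAt (by simp)
  have hL2e : ∀ i j, (fun y => L2 y i j) = fun y => L y (inj2 i) (inj2 j) := by
    intro i j
    ext y
    rw [hL2, of_apply]
  have hL2a : ∀ i j, L2 x i j = L x (inj2 i) (inj2 j) := fun i j => congrFun (hL2e i j) x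
  have hL2d : ∀ i j, DifferentiableAt ℝ (fun y => L2 y i j) x := by
    intro i j
    rw [hL2e]
    exact hLd _ _
  have hcol : ∀ b : Fin n, ∀ i : Fin (n - r), (b : ℕ) < r → L x b (inj2 i) = 0 :=
    fun b i hb => hblock x hx _ _ (Or.inl ⟨hb, Nat.le_add_right _ _⟩)
  have hrow : ∀ b : Fin n, ∀ i : Fin (n - r), (b : ℕ) < r → L x (inj2 i) b = 0 :=
    fun b i hb => hblock x hx _ _ (Or.inr ⟨Nat.le_add_right _ _, hb⟩)
  have hpoly := charpolyFDeriv_of_torsion_eq_zero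
    (e := fun b : Fin (n - r) => Pi.single (inj2 b : Fin n) (1 : ℝ)) hL2d α fun i l => by
      have h := congrFun (hNL (fun _ => Pi.single (inj2 α) 1) (fun _ => Pi.single (inj2 l) 1)
        contDiff_const contDiff_const x hx) (inj2 i)
      rw [nijenhuis_single_apply hLd,
        sum_eq_sum_inj2 hr _ fun b hb => by rw [hcol b α hb, zero_mul],
        sum_eq_sum_inj2 hr _ fun b hb => by rw [hcol b l hb, zero_mul],
        sum_eq_sum_inj2 hr _ fun b hb => by rw [hrow b i hb, zero_mul],
        sum_eq_sum_inj2 hr _ fun b hb => by rw [hrow b i hb, zero_mul]] at h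
      simpa only [hL2e, hL2a, pd, Pi.zero_apply] using h
  have hdy : ∀ β, aeval (L1 x) (charpolyFDeriv L2 x (Pi.single (inj2 β) 1)) = dyC β := by
    intro β
    ext m l
    rw [hdyC, charpolyFDeriv, map_sum, Matrix.sum_apply, Fintype.card_fin]
    simp [pd, ← Algebra.smul_def]
  have hmat := congrArg (aeval (L1 x)) hpoly
  simp only [map_sub, map_sum, map_mul, aeval_C, aeval_X, hdy] at hmat
  set χ := aeval (L1 x) (L2 x).charpoly with hχ
  have hunit : IsUnit χ.det := (isUnit_iff_isUnit_det _).1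
    (isUnit_aeval_charpoly_of_no_common_root _ _ (hcop x hx))
  have hcomm : χ⁻¹ * L1 x = L1 x * χ⁻¹ := by
    have h : L1 x * χ = χ * L1 x := by
      simpa using congrArg (aeval (L1 x)) (X_mul (p := (L2 x).charpoly))
    calc χ⁻¹ * L1 x = χ⁻¹ * (L1 x * χ) * χ⁻¹ := by
          rw [Matrix.mul_assoc, Matrix.mul_assoc (L1 x), mul_nonsing_inv _ hunit, Matrix.mul_one]
      _ = L1 x * χ⁻¹ := by
          rw [h, ← Matrix.mul_assoc, nonsing_inv_mul _ hunit, Matrix.one_mul]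
  have hfin := congrArg (fun T => (χ⁻¹ * T) j k) hmat
  simp only [← Algebra.smul_def, ← Algebra.commutes, Matrix.mul_sub, Matrix.mul_sum,
    Matrix.mul_smul, ← Matrix.mul_assoc, hcomm, nonsing_inv_mul _ hunit] at hfin
  rw [Matrix.mul_assoc] at hfin
  simp only [Matrix.sub_apply, Matrix.sum_apply, Matrix.smul_apply, smul_eq_mul] at hfin
  simp only [← mul_apply, one_apply] at hfin ⊢
  simp only [mul_comm _ (L2 x _ α), pd]
  rw [hfin, mul_comm]
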